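/- arXiv:1403.5842 — 2 statements merged into one kernel-verified Lean document; each statement's English description precedes it below -/
import Mathlib

section
/- Let Q be a Lie point characteristic generating divergence variational symmetries of the difference Lagrangian L, i.e. pr v(L) = Div R identically for some p-tuple R of difference functions depending only on forward values. Then for the Noether conservation law components P^i = T^i(L) − R^i one has, for every i ∈ {1,…,p} and all n and u: (pr v(P^i))(n,u) = (T^i(Div R))(n,u) − (pr v(R^i))(n,u). -/
open scoped Classical

/-- Multi-indices / lattice points of the lattice `ℤ^p`. -/
abbrev Idx (p : ℕ) : Type := Fin p → ℤ

/-- Fields `u : ℤ^p → ℝ^q`. -/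
abbrev Fld (p q : ℕ) : Type := Idx p → Fin q → ℝ

/-- Difference functions (raw): functions of a lattice point and a field. -/
abbrev DFun (p q : ℕ) : Type := Idx p → Fld p q → ℝ

/-- Replace the value `u^α(m)` of the field `u` by `t`. -/
noncomputable def upd {p q : ℕ} (u : Fld p q) (m : Idx p) (α : Fin q) (t : ℝ) : Fld p q :=
  fun m' β => if m' = m ∧ β = α then t else u m' β

/-- The partial derivative `∂F/∂u_J^α (n,u)`: the derivative of `F(n,u)` with
respect to the value `u^α(n+J)`. -/
noncomputable def pd {p q : ℕ} (F : DFun p q) (J : Idx p) (α : Fin q) : DFun p q :=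
  fun n u => deriv (fun t => F n (upd u (n + J) α t)) (u (n + J) α)

/-- The shift operator `S_K`. -/
def Sh {p q : ℕ} (K : Idx p) (F : DFun p q) : DFun p q := fun n u => F (n + K) u

/-- `F` is a difference function with stencil `S`: `F(n,u)` depends on `u` only
through the finitely many values `u(n+J)`, `J ∈ S`, smoothly in those values. -/
def IsDiffFun {p q : ℕ} (F : DFun p q) (S : Finset (Idx p)) : Prop :=
  ∃ G : Idx p → (({J // J ∈ S} → Fin q → ℝ) → ℝ),
    (∀ n, ContDiff ℝ (⊤ : ℕ∞) (G n)) ∧ ∀ n u, F n u = G n fun J α => u (n + J.1) α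

/-- The prolonged vector field of a characteristic `Q`, acting on a difference
function `F` with stencil `S`:
`(pr v F)(n,u) = Σ_α Σ_{J ∈ S} (S_J Q^α)(n,u) ⬝ ∂F/∂u_J^α(n,u)`. -/
noncomputable def prv {p q : ℕ} (Q : Fin q → DFun p q) (S : Finset (Idx p))
    (F : DFun p q) : DFun p q :=
  fun n u => ∑ α : Fin q, ∑ J ∈ S, Q α (n + J) u * pd F J α n u

/-- The difference divergence of a `p`-tuple of difference functions. -/
noncomputable def DDiv {p q : ℕ} (P : Fin p → DFun p q) : DFun p q :=
  fun n u => ∑ i : Fin p, (P i (n + Pi.single i (1 : ℤ)) u - P i n u)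

/-- The Euler–Lagrange expression `E_α(F)(n,u) = Σ_{J ∈ S} (∂F/∂u_J^α)(n−J,u)`
of a difference function `F` with stencil `S`. -/
noncomputable def EL {p q : ℕ} (S : Finset (Idx p)) (F : DFun p q) (α : Fin q) : DFun p q :=
  fun n u => ∑ J ∈ S, pd F J α (n - J) u

/-- The higher Euler operator
`E_{u_J^α}(L)(n,u) = Σ_{J0 ≥ 0} (∂L/∂u_{J0+J}^α)(n−J0,u)` for a difference
function `L` depending only on forward values, with stencil `S`
(reindexed by `K = J0 + J`; terms with `K ∉ S` vanish). -/
noncomputable def hEuler {p q : ℕ} (S : Finset (Idx p)) (L : DFun p q) (J : Idx p)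
    (α : Fin q) : DFun p q :=
  fun n u => ∑ K ∈ S.filter (fun K => J ≤ K), pd L K α (n - (K - J)) u

/-- `T^i(L)(n,u) = Σ_α Σ_{J ≥ 1_i} (S_{J−1_i} Q^α)(n,u) ⬝ E_{u_J^α}(L)(n−1_i,u)`
(a finite sum: only `J` with `1_i ≤ J ≤ K` for some stencil point `K` contribute). -/
noncomputable def TT {p q : ℕ} (Q : Fin q → DFun p q) (S : Finset (Idx p)) (i : Fin p)
    (L : DFun p q) : DFun p q :=
  fun n u => ∑ α : Fin q, ∑ J ∈ S.biUnion (fun K => Finset.Icc (Pi.single i (1 : ℤ)) K),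
    Q α (n + J - Pi.single i (1 : ℤ)) u * hEuler S L J α (n - Pi.single i (1 : ℤ)) u

/-!
A Lie point characteristic is a family of vector fields `w m` on the fibre `ℝ^q`, one for each
site `m`, and `pr v` is the derivative along the field `u ↦ (w m (u m))ₘ` on the space of fields.
Let `v_m` be its part at the single site `m`, so that `v_m` is the derivative along the field that
is `w m` at `m` and zero at all other sites.  Then `T^i(F)(n)` is the sum of
`v_m (F (m - K))` over `K ∈ S` and `1_i ≤ J ≤ K`, where `m = n + J - 1_i`.  Both `v_m` and `pr v`
are diagonal, so they commute because their components at every site do.  Hence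
`pr v (T^i L) = T^i (pr v L) = T^i (Div R)`.
-/

open scoped ContDiff
open VectorField

section ProductVectorFields

variable {𝕜 ι : Type*} [NontriviallyNormedField 𝕜]
  {V : ι → Type*} [∀ m, NormedAddCommGroup (V m)] [∀ m, NormedSpace 𝕜 (V m)]

theorem contDiff_piMap [Fintype ι] {n : ℕ∞ω} {w : ∀ m, V m → V m} (hw : ∀ m, ContDiff 𝕜 n (w m)) :
    ContDiff 𝕜 n (Pi.map w) :=
  contDiff_pi.2 fun m => (hw m).comp (contDiff_pi.1 contDiff_id m)

theorem fderiv_piMap_apply [Finite ι] {w : ∀ m, V m → V m} {x : ∀ m, V m}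
    (hw : ∀ m, DifferentiableAt 𝕜 (w m) (x m)) (y : ∀ m, V m) (m : ι) :
    fderiv 𝕜 (Pi.map w) x y m = fderiv 𝕜 (w m) (x m) (y m) := by
  cases nonempty_fintype ι
  have hderiv : HasFDerivAt (Pi.map w) (ContinuousLinearMap.pi fun m =>
      (fderiv 𝕜 (w m) (x m)).comp (ContinuousLinearMap.proj m)) x :=
    hasFDerivAt_pi.2 fun m => (hw m).hasFDerivAt.comp x (hasFDerivAt_apply m x)
  rw [hderiv.fderiv]
  rfl

theorem lieBracket_piMap [Fintype ι] {v w : ∀ m, V m → V m}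
    (hv : ∀ m, Differentiable 𝕜 (v m)) (hw : ∀ m, Differentiable 𝕜 (w m)) :
    lieBracket 𝕜 (Pi.map v) (Pi.map w) = Pi.map fun m => lieBracket 𝕜 (v m) (w m) := by
  ext x m
  simp only [lieBracket, Pi.sub_apply, fderiv_piMap_apply fun m => hv m (x m),
    fderiv_piMap_apply fun m => hw m (x m), Pi.map_apply]

end ProductVectorFields

section SitePart

variable {𝕜 ι V : Type*} [DecidableEq ι]

/-- The part at the site `m` of a family `w` of vector fields on the fibre `V`: it is `w m` at `m`
and zero at all other sites. -/
def sitePart [Zero V] (w : ι → V → V) (m : ι) : ι → V → V :=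
  Pi.single m (w m)

theorem piMap_sitePart [Zero V] (w : ι → V → V) (m : ι) (u : ι → V) :
    Pi.map (sitePart w m) u = Pi.single m (w m (u m)) :=
  funext fun k => Pi.apply_single (fun k (φ : V → V) => φ (u k)) (fun _ => rfl) m (w m) k

theorem contDiff_sitePart [NontriviallyNormedField 𝕜] [NormedAddCommGroup V]
    [NormedSpace 𝕜 V] {n : ℕ∞ω} {w : ι → V → V} (hw : ∀ m, ContDiff 𝕜 n (w m)) (m k : ι) :
    ContDiff 𝕜 n (sitePart w m k) := by
  obtain rfl | hk := eq_or_ne k m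
  · rw [sitePart, Pi.single_eq_same]
    exact hw k
  · rw [sitePart, Pi.single_eq_of_ne hk]
    exact contDiff_const

theorem lieBracket_sitePart [NontriviallyNormedField 𝕜] [NormedAddCommGroup V]
    [NormedSpace 𝕜 V] (w : ι → V → V) (m k : ι) :
    lieBracket 𝕜 (w k) (sitePart w m k) = 0 := by
  obtain rfl | hk := eq_or_ne k m
  · rw [sitePart, Pi.single_eq_same, lieBracket_self]
  · rw [sitePart, Pi.single_eq_of_ne hk, lieBracket_zero_right]

end SitePart

section LocalFunctionals

variable {ι V E : Type*} [NormedAddCommGroup V] [NormedSpace ℝ V]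
  [NormedAddCommGroup E] [NormedSpace ℝ E]

/-- A local functional of fields `u : ι → V`: it is a smooth function of the values of `u` at the
finitely many sites in `A`. -/
def IsLocalOn (A : Finset ι) (f : (ι → V) → E) : Prop :=
  ∃ G : (A → V) → E, ContDiff ℝ ∞ G ∧ f = G ∘ A.restrict

/-- The derivative of a functional along the vector field `u ↦ (w m (u m))ₘ` on the space of
fields, whose component at each site depends only on the value of the field there. -/
noncomputable def pointDeriv (w : ι → V → V) (f : (ι → V) → E) : (ι → V) → E :=
  fun u => lineDeriv ℝ f u (Pi.map w u)

theorem hasLineDerivAt_comp_restrict {A : Finset ι} {G : (A → V) → E} (hG : ContDiff ℝ ∞ G)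
    (u v : ι → V) :
    HasLineDerivAt ℝ (G ∘ A.restrict) (fderiv ℝ G (A.restrict u) (A.restrict v)) u v :=
  (hG.differentiable (by simp) _).hasFDerivAt.hasLineDerivAt (A.restrict v)

theorem pointDeriv_comp_restrict (w : ι → V → V) {A : Finset ι} {G : (A → V) → E}
    (hG : ContDiff ℝ ∞ G) :
    pointDeriv w (G ∘ A.restrict) =
      (fun x => fderiv ℝ G x (Pi.map (fun m : A => w m) x)) ∘ A.restrict :=
  funext fun u => (hasLineDerivAt_comp_restrict hG u (Pi.map w u)).lineDeriv

namespace IsLocalOn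

variable {A : Finset ι} {f : (ι → V) → E}

theorem lineDifferentiableAt (hf : IsLocalOn A f) (u v : ι → V) :
    LineDifferentiableAt ℝ f u v := by
  obtain ⟨G, hG, rfl⟩ := hf
  exact (hasLineDerivAt_comp_restrict hG u v).lineDifferentiableAt

theorem isLinearMap_lineDeriv (hf : IsLocalOn A f) (u : ι → V) :
    IsLinearMap ℝ (lineDeriv ℝ f u) := by
  obtain ⟨G, hG, rfl⟩ := hf
  have heq (v : ι → V) := (hasLineDerivAt_comp_restrict hG u v).lineDeriv
  exact ⟨fun v w => by simp only [heq, ← map_add]; rfl,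
    fun c v => by simp only [heq, ← map_smul]; rfl⟩

theorem lineDeriv_congr (hf : IsLocalOn A f) (u : ι → V) {v w : ι → V}
    (hvw : ∀ m ∈ A, v m = w m) : lineDeriv ℝ f u v = lineDeriv ℝ f u w := by
  obtain ⟨G, hG, rfl⟩ := hf
  have hrestrict : A.restrict v = A.restrict w := funext fun m => hvw m m.2
  rw [(hasLineDerivAt_comp_restrict hG u v).lineDeriv,
    (hasLineDerivAt_comp_restrict hG u w).lineDeriv, hrestrict]

theorem lineDeriv_sum (hf : IsLocalOn A f) (u : ι → V) {κ : Type*} (s : Finset κ)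
    (v : κ → ι → V) : lineDeriv ℝ f u (∑ k ∈ s, v k) = ∑ k ∈ s, lineDeriv ℝ f u (v k) :=
  map_sum ((hf.isLinearMap_lineDeriv u).mk' _) v s

protected theorem pointDeriv {w : ι → V → V} (hw : ∀ m, ContDiff ℝ ∞ (w m)) (hf : IsLocalOn A f) :
    IsLocalOn A (pointDeriv w f) := by
  obtain ⟨G, hG, rfl⟩ := hf
  exact ⟨_, (hG.fderiv_right (by simp)).clm_apply (contDiff_piMap fun m : A => hw m),
    pointDeriv_comp_restrict w hG⟩

theorem pointDeriv_comm {v w : ι → V → V} (hv : ∀ m, ContDiff ℝ ∞ (v m))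
    (hw : ∀ m, ContDiff ℝ ∞ (w m)) (hvw : ∀ m, lieBracket ℝ (v m) (w m) = 0)
    (hf : IsLocalOn A f) :
    pointDeriv v (pointDeriv w f) = pointDeriv w (pointDeriv v f) := by
  obtain ⟨G, hG, rfl⟩ := hf
  have hvA := contDiff_piMap fun m : A => hv m
  have hwA := contDiff_piMap fun m : A => hw m
  have hG' : ContDiff ℝ ∞ (fderiv ℝ G) := hG.fderiv_right (by simp)
  rw [pointDeriv_comp_restrict w hG, pointDeriv_comp_restrict v hG,
    pointDeriv_comp_restrict v (hG'.clm_apply hwA), pointDeriv_comp_restrict w (hG'.clm_apply hvA)]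
  ext u
  have hbracket : lieBracket ℝ (Pi.map fun m : A => v m) (Pi.map fun m : A => w m) = 0 := by
    rw [lieBracket_piMap (fun m : A => (hv m).differentiable (by simp))
      (fun m : A => (hw m).differentiable (by simp))]
    exact funext fun x => funext fun m => congrFun (hvw m) (x m)
  have hcommutator := fderiv_apply_lieBracket (x := A.restrict u) hG.contDiffAt
    (by rw [minSmoothness_of_isRCLikeNormedField]; exact ENat.LEInfty.out)
    (hwA.differentiable (by simp) _) (hvA.differentiable (by simp) _)
  rw [hbracket, Pi.zero_apply, map_zero] at hcommutator
  exact sub_eq_zero.1 hcommutator.symm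

variable [DecidableEq ι]

theorem pointDeriv_eq_sum_sitePart (hf : IsLocalOn A f) (w : ι → V → V) :
    pointDeriv w f = ∑ m ∈ A, pointDeriv (sitePart w m) f := by
  ext u
  have hdecomp : ∀ k ∈ A, Pi.map w u k = (∑ m ∈ A, Pi.map (sitePart w m) u) k := by
    intro k hk
    simp only [piMap_sitePart, Finset.sum_apply, Finset.sum_pi_single, hk, if_true, Pi.map_apply]
  rw [Finset.sum_apply, pointDeriv, hf.lineDeriv_congr u hdecomp, hf.lineDeriv_sum]
  rfl

theorem pointDeriv_sitePart_eq_zero (hf : IsLocalOn A f) (w : ι → V → V) {m : ι} (hm : m ∉ A) :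
    pointDeriv (sitePart w m) f = 0 := by
  ext u
  rw [pointDeriv, piMap_sitePart, hf.lineDeriv_congr u (w := 0), lineDeriv_zero, Pi.zero_apply]
  exact fun k hk => Pi.single_eq_of_ne (ne_of_mem_of_not_mem hk hm) _

theorem pointDeriv_comm_sitePart (hf : IsLocalOn A f) {w : ι → V → V}
    (hw : ∀ m, ContDiff ℝ ∞ (w m)) (m : ι) :
    pointDeriv w (pointDeriv (sitePart w m) f) = pointDeriv (sitePart w m) (pointDeriv w f) :=
  hf.pointDeriv_comm hw (contDiff_sitePart hw m) (lieBracket_sitePart w m)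

end IsLocalOn

end LocalFunctionals

section LiePointCharacteristics

variable {p q : ℕ}

theorem isDiffFun_iff_isLocalOn {F : DFun p q} {S : Finset (Idx p)} :
    IsDiffFun F S ↔ ∀ n, IsLocalOn (S.map (addLeftEmbedding n)) (F n) := by
  let e (n : Idx p) : S ≃ S.map (addLeftEmbedding n) :=
    (Equiv.addLeft n).subtypeEquiv fun J => by simp
  constructor
  · rintro ⟨G, hG, hF⟩ n
    exact ⟨fun x => G n fun J => x (e n J), (hG n).comp (by fun_prop), funext (hF n)⟩
  · intro hF
    choose G hG hF using hF
    refine ⟨fun n x => G n fun m => x ((e n).symm m), fun n => (hG n).comp (by fun_prop),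
      fun n u => ?_⟩
    rw [hF]
    exact congrArg (G n) (funext fun m => (congrArg (fun k : S.map (addLeftEmbedding n) => u k)
      ((e n).apply_symm_apply m)).symm)

/-- The Lie point characteristic with `Q^α(n,u) = (w n (u n))^α`, where `w n` is a vector field on
the fibre `ℝ^q` at the site `n`. -/
def pointChar (w : Idx p → (Fin q → ℝ) → Fin q → ℝ) : Fin q → DFun p q :=
  fun α n u => w n (u n) α

theorem exists_eq_pointChar {Q : Fin q → DFun p q} (hQ : ∀ α, IsDiffFun (Q α) {0}) :
    ∃ w, (∀ n, ContDiff ℝ ∞ (w n)) ∧ Q = pointChar w := by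
  choose G hG hQ using hQ
  refine ⟨fun n x α => G α n fun _ => x,
    fun n => contDiff_pi.2 fun α => (hG α n).comp (by fun_prop), ?_⟩
  funext α n u
  rw [hQ, pointChar]
  congr 1
  funext J β
  rw [Finset.mem_singleton.1 J.2, add_zero]

theorem upd_eq_add_smul (u : Fld p q) (m : Idx p) (α : Fin q) (t : ℝ) :
    upd u m α t = u + (t - u m α) • (Pi.single m (Pi.single α 1) : Fld p q) := by
  ext k β
  obtain rfl | hk := eq_or_ne k m
  · obtain rfl | hβ := eq_or_ne β α
    · simp [upd]
    · simp [upd, hβ]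
  · simp [upd, hk]

theorem pd_eq_lineDeriv (F : DFun p q) (J : Idx p) (α : Fin q) (n : Idx p) (u : Fld p q) :
    pd F J α n u = lineDeriv ℝ (F n) u (Pi.single (n + J) (Pi.single α 1)) := by
  simp only [pd, upd_eq_add_smul, lineDeriv]
  rw [deriv_comp_sub_const
    (f := fun t : ℝ => F n (u + t • (Pi.single (n + J) (Pi.single α 1) : Fld p q))), sub_self]

variable {F : DFun p q} {S : Finset (Idx p)}

theorem sum_pointChar_mul_pd (hF : IsDiffFun F S) (w : Idx p → (Fin q → ℝ) → Fin q → ℝ)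
    (n J : Idx p) (u : Fld p q) :
    ∑ α, pointChar w α (n + J) u * pd F J α n u = pointDeriv (sitePart w (n + J)) (F n) u := by
  have hdecomp : Pi.map (sitePart w (n + J)) u =
      ∑ α, pointChar w α (n + J) u • (Pi.single (n + J) (Pi.single α 1) : Fld p q) := by
    rw [piMap_sitePart]
    simpa only [pointChar, map_sum, map_smul, LinearMap.coe_single] using
      congrArg (LinearMap.single ℝ (fun _ : Idx p => Fin q → ℝ) (n + J))
        (pi_eq_sum_univ' (w (n + J) (u (n + J))))
  simp only [pointDeriv, hdecomp, (isDiffFun_iff_isLocalOn.1 hF n).lineDeriv_sum, lineDeriv_smul,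
    pd_eq_lineDeriv, smul_eq_mul]

theorem prv_pointChar (hF : IsDiffFun F S) (w : Idx p → (Fin q → ℝ) → Fin q → ℝ) (n : Idx p) :
    prv (pointChar w) S F n = pointDeriv w (F n) := by
  ext u
  rw [prv, Finset.sum_comm, (isDiffFun_iff_isLocalOn.1 hF n).pointDeriv_eq_sum_sitePart,
    Finset.sum_map, Finset.sum_apply]
  exact Finset.sum_congr rfl fun J _ => sum_pointChar_mul_pd hF w n J u

theorem isDiffFun_prv_pointChar {w : Idx p → (Fin q → ℝ) → Fin q → ℝ}
    (hw : ∀ n, ContDiff ℝ ∞ (w n)) (hF : IsDiffFun F S) :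
    IsDiffFun (prv (pointChar w) S F) S :=
  isDiffFun_iff_isLocalOn.2 fun n =>
    prv_pointChar hF w n ▸ (isDiffFun_iff_isLocalOn.1 hF n).pointDeriv hw

theorem sum_pointChar_mul_hEuler (hF : IsDiffFun F S) (w : Idx p → (Fin q → ℝ) → Fin q → ℝ)
    (J m : Idx p) (u : Fld p q) :
    ∑ α, pointChar w α m u * hEuler S F J α (m - J) u =
      ∑ K ∈ S with J ≤ K, pointDeriv (sitePart w m) (F (m - K)) u := by
  simp only [hEuler, Finset.mul_sum]
  rw [Finset.sum_comm]
  refine Finset.sum_congr rfl fun K _ => ?_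
  simpa only [sub_add_cancel, sub_sub_sub_cancel_right, sub_sub, add_sub_cancel] using
    sum_pointChar_mul_pd hF w (m - K) K u

theorem TT_pointChar (hF : IsDiffFun F S) (w : Idx p → (Fin q → ℝ) → Fin q → ℝ) (i : Fin p)
    (n : Idx p) :
    TT (pointChar w) S i F n = ∑ K ∈ S, ∑ J ∈ Finset.Icc (Pi.single i 1) K,
      pointDeriv (sitePart w (n + J - Pi.single i 1)) (F (n + J - Pi.single i 1 - K)) := by
  ext u
  rw [TT, Finset.sum_comm]
  simp only [Finset.sum_apply]
  have hsite (J : Idx p) : n - Pi.single i 1 = n + J - Pi.single i 1 - J := by abel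
  have hsum (J : Idx p) := sum_pointChar_mul_hEuler hF w J (n + J - Pi.single i 1) u
  simp only [← hsite] at hsum
  simp only [hsum]
  refine Finset.sum_comm' fun J K => ?_
  simp only [Finset.mem_biUnion, Finset.mem_filter, Finset.mem_Icc]
  exact ⟨fun ⟨⟨_, _, hiJ, _⟩, hK, hJK⟩ => ⟨⟨hiJ, hJK⟩, hK⟩,
    fun ⟨⟨hiJ, hJK⟩, hK⟩ => ⟨⟨K, hK, hiJ, hJK⟩, hK, hJK⟩⟩

theorem TT_pointChar_congr_stencil {S' : Finset (Idx p)} (hF : IsDiffFun F S)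
    (hF' : IsDiffFun F S') (w : Idx p → (Fin q → ℝ) → Fin q → ℝ) (i : Fin p) (n : Idx p) :
    TT (pointChar w) S i F n = TT (pointChar w) S' i F n := by
  have hzero {S₀ : Finset (Idx p)} (hF₀ : IsDiffFun F S₀) : ∀ K ∈ S ∪ S', K ∉ S₀ →
      ∑ J ∈ Finset.Icc (Pi.single i 1) K,
        pointDeriv (sitePart w (n + J - Pi.single i 1)) (F (n + J - Pi.single i 1 - K)) = 0 := by
    refine fun K _ hK => Finset.sum_eq_zero fun J _ => ?_
    refine (isDiffFun_iff_isLocalOn.1 hF₀ _).pointDeriv_sitePart_eq_zero w ?_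
    simpa [← eq_sub_iff_add_eq'] using hK
  rw [TT_pointChar hF, TT_pointChar hF', Finset.sum_subset Finset.subset_union_left (hzero hF),
    Finset.sum_subset Finset.subset_union_right (hzero hF')]

theorem hasLineDerivAt_TT_pointChar {w : Idx p → (Fin q → ℝ) → Fin q → ℝ}
    (hw : ∀ n, ContDiff ℝ ∞ (w n)) (hF : IsDiffFun F S) (i : Fin p) (n : Idx p) (u : Fld p q) :
    HasLineDerivAt ℝ (TT (pointChar w) S i F n)
      (TT (pointChar w) S i (prv (pointChar w) S F) n u) u (Pi.map w u) := by
  have hterm (K m : Idx p) : HasLineDerivAt ℝ (pointDeriv (sitePart w m) (F (m - K)))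
      (pointDeriv (sitePart w m) (pointDeriv w (F (m - K))) u) u (Pi.map w u) := by
    have hF' := isDiffFun_iff_isLocalOn.1 hF (m - K)
    rw [← hF'.pointDeriv_comm_sitePart hw]
    exact ((hF'.pointDeriv (contDiff_sitePart hw m)).lineDifferentiableAt u _).hasLineDerivAt
  rw [TT_pointChar hF, TT_pointChar (isDiffFun_prv_pointChar hw hF)]
  simp only [prv_pointChar hF, Finset.sum_apply]
  unfold HasLineDerivAt
  simp only [Finset.sum_apply]
  exact .fun_sum fun K _ => .fun_sum fun J _ => hterm K _

end LiePointCharacteristics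

theorem stmt_10_general {p q : ℕ} {Q : Fin q → DFun p q} (hQ : ∀ α, IsDiffFun (Q α) {0})
    {L M R : DFun p q} {S SM SR SP : Finset (Idx p)} (hL : IsDiffFun L S) (hM : IsDiffFun M SM)
    (hR : IsDiffFun R SR) (hsym : ∀ n u, prv Q S L n u = M n u) (i : Fin p)
    (hP : IsDiffFun (fun n u => TT Q S i L n u - R n u) SP) (n : Idx p) (u : Fld p q) :
    prv Q SP (fun n u => TT Q S i L n u - R n u) n u = TT Q SM i M n u - prv Q SR R n u := by
  obtain ⟨w, hw, rfl⟩ := exists_eq_pointChar hQ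
  obtain rfl : prv (pointChar w) S L = M := funext₂ hsym
  have hTT := hasLineDerivAt_TT_pointChar hw hL i n u
  have hR' := ((isDiffFun_iff_isLocalOn.1 hR n).lineDifferentiableAt u (Pi.map w u)).hasLineDerivAt
  rw [prv_pointChar hP, prv_pointChar hR,
    TT_pointChar_congr_stencil hM (isDiffFun_prv_pointChar hw hL)]
  exact (HasDerivAt.fun_sub hTT hR').deriv

/-- Let `Q` be a Lie point characteristic generating
divergence variational symmetries of the difference Lagrangian `L`, i.e.
`pr v(L) = Div R` identically for some `p`-tuple `R` of difference functions
depending only on forward values.  Then for the Noether conservation law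
components `P^i = T^i(L) − R^i` one has, for every `i` and all `n`, `u`:
`(pr v(P^i))(n,u) = (T^i(Div R))(n,u) − (pr v(R^i))(n,u)`. -/
theorem stmt_10 {p q : ℕ} (hp : 1 ≤ p) (hq : 1 ≤ q)
    (Q : Fin q → DFun p q)
    (hQ : ∀ α, IsDiffFun (Q α) ({(0 : Idx p)} : Finset (Idx p)))
    (L : DFun p q) (S : Finset (Idx p)) (hL : IsDiffFun L S)
    (hS : ∀ K ∈ S, (0 : Idx p) ≤ K)
    (R : Fin p → DFun p q) (SR : Fin p → Finset (Idx p))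
    (hR : ∀ i, IsDiffFun (R i) (SR i))
    (hSR : ∀ i, ∀ K ∈ SR i, (0 : Idx p) ≤ K)
    (hsym : ∀ (n : Idx p) (u : Fld p q), prv Q S L n u = DDiv R n u)
    (SD : Finset (Idx p)) (hSD : IsDiffFun (DDiv R) SD)
    (SP : Fin p → Finset (Idx p))
    (hSP : ∀ i, IsDiffFun (fun n' u' => TT Q S i L n' u' - R i n' u') (SP i)) :
    ∀ (i : Fin p) (n : Idx p) (u : Fld p q),
      prv Q (SP i) (fun n' u' => TT Q S i L n' u' - R i n' u') n u
        = TT Q SD i (DDiv R) n u - prv Q (SR i) (R i) n u :=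
  fun i => stmt_10_general hQ hL hSD (hR i) hsym i (hSP i)
end

section
/- Let p = 1 and let Q be a Lie point characteristic. For every difference function R depending only on forward values u(n+m), m ≥ 0, and all n ∈ ℤ and fields u : ℤ → ℝ^q: T(SR − R)(n,u) = (pr v R)(n,u), where SR denotes the difference function (n,u) ↦ R(n+1,u) and T = T^1 is built from Q. -/
open scoped Classical

/-!
The sums defining the Euler operators do not depend on the stencil, so they may be written as
`finsum`s over upper sets. Since `∂(SR − R)/∂u_K = S(∂R/∂u_{K-1}) − ∂R/∂u_K`, the sum defining
`E_{u_J}(SR − R)` telescopes and only its boundary term `S(∂R/∂u_{J-1})` survives. Evaluated at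
`n − 1`, this is `∂R/∂u_{J-1}(n, u)`, so that `T(SR − R)` is `pr v R` with the summation index
shifted by one.
-/

section FinsumIci

theorem finsum_mem_Ici_comp_sub {G M : Type*} [AddCommGroup G] [PartialOrder G]
    [IsOrderedAddMonoid G] [AddCommMonoid M] (f : G → M) (a b : G) :
    ∑ᶠ x ∈ Set.Ici b, f (x - a) = ∑ᶠ x ∈ Set.Ici (b - a), f x := by
  rw [← Set.image_sub_const_Ici, finsum_mem_image sub_left_injective.injOn]

theorem Ici_sub_single_eq_insert (J : Idx 1) :
    Set.Ici (J - Pi.single 0 1) = insert (J - Pi.single 0 1) (Set.Ici J) := by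
  ext K
  simp only [Set.mem_insert_iff, Set.mem_Ici, Pi.le_def, funext_iff, Fin.forall_fin_one,
    Pi.sub_apply, Pi.single_eq_same]
  omega

theorem finsum_mem_Ici_sub_telescope {M : Type*} [AddCommGroup M] {f : Idx 1 → M}
    (hf : f.HasFiniteSupport) (J : Idx 1) :
    ∑ᶠ K ∈ Set.Ici J, (f (K - Pi.single 0 1) - f K) = f (J - Pi.single 0 1) := by
  have hsub : (fun K => f (K - Pi.single 0 1) - f K).HasFiniteSupport :=
    (hf.fun_comp_of_injective sub_left_injective).sub hf
  have hnotMem : J - Pi.single 0 1 ∉ Set.Ici J := fun h => by simpa using h 0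
  refine add_right_cancel (b := ∑ᶠ K ∈ Set.Ici J, f K) ?_
  calc (∑ᶠ K ∈ Set.Ici J, (f (K - Pi.single 0 1) - f K)) + ∑ᶠ K ∈ Set.Ici J, f K
      = ∑ᶠ K ∈ Set.Ici J, f (K - Pi.single 0 1) := by
        rw [← finsum_mem_add_distrib' (hsub.inter_of_right _) (hf.inter_of_right _)]
        simp only [sub_add_cancel]
    _ = ∑ᶠ K ∈ insert (J - Pi.single 0 1) (Set.Ici J), f K := by
        rw [finsum_mem_Ici_comp_sub, Ici_sub_single_eq_insert]
    _ = f (J - Pi.single 0 1) + ∑ᶠ K ∈ Set.Ici J, f K :=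
        finsum_mem_insert' f hnotMem (hf.inter_of_right _)

end FinsumIci

section DifferenceFunctions

variable {p q : ℕ} {F : DFun p q} {S : Finset (Idx p)}

/-- `F(n,u)` depends on `u` only through the values `u(n+J)` with `J ∈ S`; this is the locality
part of `IsDiffFun`. -/
def HasStencil (F : DFun p q) (S : Finset (Idx p)) : Prop :=
  ∀ n, DependsOn (F n) ((n + ·) '' S)

/-- `F(n,u)` is a differentiable function of each single value `u^α(m)`, the others being held
fixed. The lattice point `m` is absolute, not relative to `n` as the `J` of `pd`. -/
def PartiallyDifferentiable (F : DFun p q) : Prop :=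
  ∀ n u m α, Differentiable ℝ fun t => F n (upd u m α t)

theorem upd_apply_of_ne {m m' : Idx p} (h : m' ≠ m) (u : Fld p q) (α : Fin q) (t : ℝ) :
    upd u m α t m' = u m' :=
  funext fun _ => if_neg fun h' => h h'.1

theorem differentiable_upd_apply (u : Fld p q) (m m' : Idx p) (α β : Fin q) :
    Differentiable ℝ fun t => upd u m α t m' β := by
  unfold upd
  split_ifs <;> fun_prop

theorem IsDiffFun.hasStencil (hF : IsDiffFun F S) : HasStencil F S := by
  obtain ⟨G, -, hFG⟩ := hF
  intro n u v huv
  rw [hFG, hFG]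
  congr 1
  funext J
  exact huv _ ⟨J, J.2, rfl⟩

theorem IsDiffFun.partiallyDifferentiable (hF : IsDiffFun F S) : PartiallyDifferentiable F := by
  obtain ⟨G, hG, hFG⟩ := hF
  intro n u m α
  simp only [hFG]
  refine ((hG n).differentiable (by simp)).comp (f := fun t J β => upd u m α t (n + J.1) β) ?_
  exact differentiable_pi.2 fun J => differentiable_pi.2 fun β =>
    differentiable_upd_apply u m (n + J.1) α β

theorem HasStencil.fwdDiff (hF : HasStencil F S) (K : Idx p) :
    HasStencil (fwdDiff K F) (S ∪ S.image (· + K)) := by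
  intro n u v huv
  have hbase : F n u = F n v := by
    refine hF n ?_
    rintro _ ⟨J, hJ, rfl⟩
    exact huv _ ⟨J, Finset.mem_union_left _ hJ, rfl⟩
  have hshift : F (n + K) u = F (n + K) v := by
    refine hF (n + K) ?_
    rintro _ ⟨J, hJ, rfl⟩
    exact huv _ ⟨J + K, Finset.mem_union_right _ (Finset.mem_image_of_mem _ hJ), by
      simp only; abel⟩
  exact congrArg₂ (· - ·) hshift hbase

theorem HasStencil.pd_eq_zero (hF : HasStencil F S) {J : Idx p} (hJ : J ∉ S) (α : Fin q)
    (n : Idx p) (u : Fld p q) : pd F J α n u = 0 := by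
  have hconst (t : ℝ) : F n (upd u (n + J) α t) = F n u := by
    refine hF n ?_
    rintro _ ⟨K, hK, rfl⟩
    have hKJ : K ≠ J := fun h => hJ (h ▸ hK)
    exact upd_apply_of_ne (fun h => hKJ (add_left_cancel h)) u α t
  simp only [pd, hconst, deriv_const]

theorem pd_fwdDiff (hF : PartiallyDifferentiable F) (K J : Idx p) (α : Fin q) (n : Idx p)
    (u : Fld p q) :
    pd (fwdDiff K F) J α n u = pd F (J - K) α (n + K) u - pd F J α n u := by
  have hpoint : n + K + (J - K) = n + J := by abel
  unfold pd
  rw [hpoint]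
  exact deriv_fun_sub (hF (n + K) u (n + J) α _) (hF n u (n + J) α _)

theorem hEuler_eq_finsum (hF : HasStencil F S) (J : Idx p) (α : Fin q) (n : Idx p) (u : Fld p q) :
    hEuler S F J α n u = ∑ᶠ K ∈ Set.Ici J, pd F K α (n - (K - J)) u := by
  refine (finsum_mem_eq_sum_of_subset _ ?_ fun K hK => (Finset.mem_filter.1 hK).2).symm
  rintro K ⟨hJK, hK⟩
  exact Finset.mem_filter.2 ⟨by_contra fun hKS => hK (hF.pd_eq_zero hKS _ _ _), hJK⟩

theorem TT_eq_finsum (Q : Fin q → DFun p q) (S : Finset (Idx p)) (i : Fin p) (L : DFun p q)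
    (n : Idx p) (u : Fld p q) :
    TT Q S i L n u = ∑ α, ∑ᶠ J ∈ Set.Ici (Pi.single i 1),
      Q α (n + J - Pi.single i 1) u * hEuler S L J α (n - Pi.single i 1) u := by
  refine Finset.sum_congr rfl fun α _ => (finsum_mem_eq_sum_of_subset _ ?_ ?_).symm
  · rintro J ⟨hiJ, hJ⟩
    obtain ⟨K, hK, -⟩ := Finset.exists_ne_zero_of_sum_ne_zero (right_ne_zero_of_mul hJ)
    obtain ⟨hKS, hJK⟩ := Finset.mem_filter.1 hK
    exact Finset.mem_biUnion.2 ⟨K, hKS, Finset.mem_Icc.2 ⟨hiJ, hJK⟩⟩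
  · intro J hJ
    obtain ⟨K, -, hJK⟩ := Finset.mem_biUnion.1 hJ
    exact (Finset.mem_Icc.1 hJK).1

end DifferenceFunctions

section OneDimensional

variable {q : ℕ} {R : DFun 1 q} {S T : Finset (Idx 1)}

theorem hEuler_fwdDiff (hR : HasStencil R S) (hdiff : PartiallyDifferentiable R)
    (hT : HasStencil (fwdDiff (Pi.single 0 1) R) T) (J : Idx 1) (α : Fin q) (n : Idx 1)
    (u : Fld 1 q) :
    hEuler T (fwdDiff (Pi.single 0 1) R) J α n u
      = pd R (J - Pi.single 0 1) α (n + Pi.single 0 1) u := by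
  let f (K : Idx 1) : ℝ := pd R K α (n - (K - J)) u
  have hf : f.HasFiniteSupport := S.finite_toSet.subset fun K hK =>
    by_contra fun hKS => hK (hR.pd_eq_zero hKS _ _ _)
  have hterm (K : Idx 1) : pd (fwdDiff (Pi.single 0 1) R) K α (n - (K - J)) u
      = f (K - Pi.single 0 1) - f K := by
    have hpoint : n - (K - J) + Pi.single 0 1 = n - (K - Pi.single 0 1 - J) := by abel
    rw [pd_fwdDiff hdiff, hpoint]
  have hboundary : n - (J - Pi.single 0 1 - J) = n + Pi.single 0 1 := by abel
  calc hEuler T (fwdDiff (Pi.single 0 1) R) J α n u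
      = ∑ᶠ K ∈ Set.Ici J, (f (K - Pi.single 0 1) - f K) := by
        simp only [hEuler_eq_finsum hT, hterm]
    _ = f (J - Pi.single 0 1) := finsum_mem_Ici_sub_telescope hf J
    _ = pd R (J - Pi.single 0 1) α (n + Pi.single 0 1) u := by simp only [f, hboundary]

theorem stmt_11_general (Q : Fin q → DFun 1 q) (hR : HasStencil R S)
    (hdiff : PartiallyDifferentiable R) (hS : ∀ K ∈ S, 0 ≤ K)
    (hT : HasStencil (fwdDiff (Pi.single 0 1) R) T) (n : Idx 1) (u : Fld 1 q) :
    TT Q T 0 (fwdDiff (Pi.single 0 1) R) n u = prv Q S R n u := by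
  rw [TT_eq_finsum]
  refine Finset.sum_congr rfl fun α _ => ?_
  let f (J : Idx 1) : ℝ := Q α (n + J) u * pd R J α n u
  have hf : f.support ⊆ S := fun J hJ =>
    by_contra fun hJS => right_ne_zero_of_mul hJ (hR.pd_eq_zero hJS _ _ _)
  calc ∑ᶠ J ∈ Set.Ici (Pi.single 0 1), Q α (n + J - Pi.single 0 1) u *
        hEuler T (fwdDiff (Pi.single 0 1) R) J α (n - Pi.single 0 1) u
      = ∑ᶠ J ∈ Set.Ici (Pi.single 0 1), f (J - Pi.single 0 1) := by
        simp only [f, hEuler_fwdDiff hR hdiff hT, sub_add_cancel, add_sub_assoc]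
    _ = ∑ᶠ J ∈ Set.Ici 0, f J := by rw [finsum_mem_Ici_comp_sub, sub_self]
    _ = ∑ J ∈ S, f J := finsum_mem_eq_sum_of_subset f (fun J hJ => hf hJ.2) hS

end OneDimensional

/-- Let `p = 1` and let `Q` be a Lie point characteristic.
For every difference function `R` depending only on forward values, and all
`n`, `u`: `T(SR − R)(n,u) = (pr v R)(n,u)`, where `SR` is the difference
function `(n,u) ↦ R(n+1,u)` and `T = T^1` is built from `Q`.
(The stencil of `SR − R` is `SR ∪ (SR + 1)`.) -/
theorem stmt_11 {q : ℕ} (hq : 1 ≤ q)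
    (Q : Fin q → DFun 1 q)
    (hQ : ∀ α, IsDiffFun (Q α) ({(0 : Idx 1)} : Finset (Idx 1)))
    (R : DFun 1 q) (SR : Finset (Idx 1)) (hR : IsDiffFun R SR)
    (hSR : ∀ K ∈ SR, (0 : Idx 1) ≤ K)
    (n : Idx 1) (u : Fld 1 q) :
    TT Q (SR ∪ SR.image (fun K => K + Pi.single 0 (1 : ℤ))) 0
        (fun n' u' => R (n' + Pi.single 0 (1 : ℤ)) u' - R n' u') n u
      = prv Q SR R n u :=
  stmt_11_general Q hR.hasStencil hR.partiallyDifferentiable hSR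
    (hR.hasStencil.fwdDiff (Pi.single 0 1)) n u
end
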